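/- arXiv:2002.00050 — 4 statements merged into one kernel-verified Lean document; each statement's English description precedes it below -/
import Mathlib

section
/- Let n and k be positive integers with gcd(k, n) = 1, and let F : F_{2^n} → F_{2^n} be the Kasami function F(x) = x^{2^{2k} - 2^k + 1}. Then F is almost perfect nonlinear (APN): for every a ∈ F_{2^n} with a ≠ 0 and every b ∈ F_{2^n}, the equation F(x) + F(x + a) = b has at most 2 solutions x in F_{2^n}. -/
/-!
Put `q = 2 ^ k`, `φ x = x ^ q`, and `u = φ x + x`. Scaling reduces the derivatives of the Kasami
function `f` to the one in direction `1`, and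
`(f x + f (x + 1) + 1) * φ (x ^ 2 + x) = u * φ u`.
Fixing the value `c` of the first factor, an application of `φ` makes this equation affine in `u`:
`c * φ (φ u) = φ c * u + c * φ c * φ u + c * φ c`.
Let `x`, `y` be two solutions, and `W = u * φ v + φ u * v` the Wronskian of `u` and `v = φ y + y`.
The affine equation shows that `W / c + φ (x + y)` is fixed by `φ`, hence is `0` or `1`; replacing
`y` by `y + 1` we may assume that it is `0`. Then `s = x * φ y + φ x * y` and `w = u + v` satisfy
`s * φ s = 0` and `s * φ w + φ s * w = w * φ w`, so that `w = 0`, which means `x + y ∈ {0, 1}`.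
-/

/-- Almost perfect nonlinear functions: each derivative in a nonzero direction takes each value at
most twice. Derivatives are sums rather than differences, as is customary in characteristic `2`;
`encard` makes the bound include finiteness of the fibres. -/
def IsAPN {G : Type*} [Add G] [Zero G] (f : G → G) : Prop :=
  ∀ a, a ≠ 0 → ∀ b, {x | f x + f (x + a) = b}.encard ≤ 2

theorem IsAPN.of_eq_or_eq_add {G : Type*} [Add G] [Zero G] {f : G → G}
    (h : ∀ a, a ≠ 0 → ∀ x y, f x + f (x + a) = f y + f (y + a) → y = x ∨ y = x + a) :
    IsAPN f := by
  intro a ha b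
  obtain hempty | ⟨x, hx⟩ := Set.eq_empty_or_nonempty {x | f x + f (x + a) = b}
  · simp [hempty]
  · have hsub : {x | f x + f (x + a) = b} ⊆ {x, x + a} :=
      fun y hy ↦ h a ha x y (Eq.trans hx (Eq.symm hy))
    calc {x | f x + f (x + a) = b}.encard
        ≤ ({x, x + a} : Set G).encard := Set.encard_le_encard hsub
      _ ≤ ({x + a} : Set G).encard + 1 := Set.encard_insert_le _ _
      _ = 2 := by rw [Set.encard_singleton, one_add_one_eq_two]

theorem IsAPN.ncard_le_two {G : Type*} [Add G] [Zero G] {f : G → G} (hf : IsAPN f) {a : G}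
    (ha : a ≠ 0) (b : G) : {x | f x + f (x + a) = b}.ncard ≤ 2 :=
  ENat.toNat_le_of_le_natCast (hf a ha b)

theorem IsAPN.of_monoidWithZeroHom {F : Type*} [Field F] {f : F →*₀ F}
    (h : ∀ x y, f x + f (x + 1) = f y + f (y + 1) → y = x ∨ y = x + 1) : IsAPN f := by
  refine .of_eq_or_eq_add fun a ha x y hxy ↦ ?_
  have scale (s : F) : f s + f (s + a) = f a * (f (s / a) + f (s / a + 1)) := by
    rw [mul_add, ← map_mul, ← map_mul, mul_add, mul_div_cancel₀ s ha, mul_one]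
  rw [scale, scale] at hxy
  refine (h _ _ (mul_left_cancel₀ ((map_ne_zero f).2 ha) hxy)).imp (fun e ↦ ?_) fun e ↦ ?_
  · exact (div_left_inj' ha).1 e
  · rwa [div_add_one ha, div_left_inj' ha] at e

/-- The Kasami function attached to an endomorphism `φ` of a field. If `φ` is the Frobenius power
`x ↦ x ^ 2 ^ k`, this is `x ↦ x ^ (2 ^ (2 * k) - 2 ^ k + 1)`. Since `0 / 0 = 0`, the quotient has
the intended value at `0`. -/
def kasami {F : Type*} [Field F] (φ : F →+* F) : F →*₀ F where
  toFun x := φ (φ x) * x / φ x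
  map_zero' := by simp
  map_one' := by simp
  map_mul' x y := by simp only [map_mul]; rw [mul_mul_mul_comm, mul_div_mul_comm]

theorem kasami_mul_map {F : Type*} [Field F] (φ : F →+* F) (x : F) :
    kasami φ x * φ x = φ (φ x) * x :=
  div_mul_cancel_of_imp fun h ↦ by simp [h]

theorem kasami_iterateFrobenius {F : Type*} [Field F] [CharP F 2] (k : ℕ) (x : F) :
    kasami (iterateFrobenius F 2 k) x = x ^ (2 ^ (2 * k) - 2 ^ k + 1) := by
  obtain rfl | hx := eq_or_ne x 0
  · simp
  have hexp : 2 ^ (2 * k) - 2 ^ k + 1 + 2 ^ k = 2 ^ (k + k) + 1 := by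
    have hle : 2 ^ k ≤ 2 ^ (2 * k) := Nat.pow_le_pow_right two_pos (by lia)
    rw [add_right_comm, Nat.sub_add_cancel hle, two_mul]
  refine mul_right_cancel₀ (pow_ne_zero (2 ^ k) hx) ?_
  calc kasami (iterateFrobenius F 2 k) x * x ^ 2 ^ k
      = (x ^ 2 ^ k) ^ 2 ^ k * x := by
        simpa only [iterateFrobenius_def] using kasami_mul_map (iterateFrobenius F 2 k) x
    _ = x ^ (2 ^ (2 * k) - 2 ^ k + 1) * x ^ 2 ^ k := by
        rw [← pow_mul, ← pow_add, ← pow_succ, ← hexp, ← pow_add]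

theorem iterateFrobenius_gcd_eq_self {F : Type*} [Field F] [Fintype F] {p n k : ℕ}
    [Fact p.Prime] [CharP F p] (hcard : Fintype.card F = p ^ n) {x : F}
    (hx : iterateFrobenius F p k x = x) : iterateFrobenius F p (Nat.gcd k n) x = x := by
  have hk : Function.IsPeriodicPt (frobenius F p) k x := by
    rwa [coe_iterateFrobenius] at hx
  have hn : Function.IsPeriodicPt (frobenius F p) n x := by
    rw [Function.IsPeriodicPt, ← coe_iterateFrobenius, Function.IsFixedPt, iterateFrobenius_def,
      ← hcard, FiniteField.pow_card]
  rw [coe_iterateFrobenius]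
  exact hk.gcd hn

theorem eq_zero_or_one_of_iterateFrobenius_eq_self {F : Type*} [Field F] [Fintype F] [CharP F 2]
    {n k : ℕ} (hcard : Fintype.card F = 2 ^ n) (hgcd : Nat.gcd k n = 1) (x : F)
    (hx : iterateFrobenius F 2 k x = x) : x = 0 ∨ x = 1 := by
  have hsq : x ^ 2 = x := by
    simpa only [hgcd, iterateFrobenius_def, pow_one] using iterateFrobenius_gcd_eq_self hcard hx
  rwa [sq, ← IsIdempotentElem, IsIdempotentElem.iff_eq_zero_or_one] at hsq

/-- The Wronskian of two elements of a ring with an endomorphism `φ`, written with a plus sign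
because it is used in characteristic `2`. -/
def wronskian {R : Type*} [CommRing R] (φ : R →+* R) (u v : R) : R :=
  u * φ v + φ u * v

theorem mul_map_wronskian {R : Type*} [CommRing R] [CharP R 2] {φ : R →+* R} {c u v : R}
    (hu : c * φ (φ u) = φ c * u + c * φ c * φ u + c * φ c)
    (hv : c * φ (φ v) = φ c * v + c * φ c * φ v + c * φ c) :
    c * φ (wronskian φ u v) = φ c * wronskian φ u v + c * φ c * φ (u + v) := by
  simp only [wronskian, map_add, map_mul]
  linear_combination φ u * hv + φ v * hu + c * φ c * φ u * φ v * CharTwo.two_eq_zero (R := R)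

theorem wronskian_eq_map_mul_add {R : Type*} [CommRing R] [CharP R 2] (φ : R →+* R) (x y : R) :
    wronskian φ x y = φ x * (φ y + y) + (φ x + x) * φ y := by
  rw [wronskian]
  linear_combination (-φ x * φ y) * CharTwo.two_eq_zero (R := R)

theorem map_wronskian_eq_map_mul_map_add {R : Type*} [CommRing R] [CharP R 2] (φ : R →+* R)
    (x y : R) : φ (wronskian φ x y) = φ x * φ (φ y + y) + φ (φ x + x) * φ y := by
  simp only [wronskian, map_add, map_mul]
  linear_combination (-φ x * φ y) * CharTwo.two_eq_zero (R := R)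

theorem map_add_one_add_add_one {R : Type*} [CommRing R] [CharP R 2] (φ : R →+* R) (x : R) :
    φ (x + 1) + (x + 1) = φ x + x := by
  rw [map_add, map_one, add_add_add_comm, CharTwo.add_self_eq_zero, add_zero]

section Derivative

variable {F : Type*} [Field F] {φ : F →+* F} {c x y : F}

/-- `x` is not fixed by `φ` and solves the equation
`kasami φ x + kasami φ (x + 1) + 1 = c`, with the denominator `φ (x ^ 2 + x)` cleared. -/
structure IsKasamiDerivSolution (φ : F →+* F) (c x : F) : Prop where
  map_add_self_ne_zero : φ x + x ≠ 0
  mul_map_sq_add : c * φ (x ^ 2 + x) = (φ x + x) * φ (φ x + x)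

theorem IsKasamiDerivSolution.ne_zero (hx : IsKasamiDerivSolution φ c x) : c ≠ 0 := by
  rintro rfl
  have hu := hx.map_add_self_ne_zero
  exact mul_ne_zero hu ((map_ne_zero φ).2 hu) (by rw [← hx.mul_map_sq_add, zero_mul])

variable [CharP F 2]

theorem kasami_add_kasami_add_one_add_one_mul (φ : F →+* F) (x : F) :
    (kasami φ x + kasami φ (x + 1) + 1) * φ (x ^ 2 + x) = (φ x + x) * φ (φ x + x) := by
  have hx := kasami_mul_map φ x
  have hx1 := kasami_mul_map φ (x + 1)
  simp only [map_add, map_one, map_pow] at hx1 ⊢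
  linear_combination (φ x + 1) * hx + φ x * hx1 +
    (φ x * φ (φ x) * x + φ x) * CharTwo.two_eq_zero (R := F)

namespace IsKasamiDerivSolution

theorem add_one (hx : IsKasamiDerivSolution φ c x) : IsKasamiDerivSolution φ c (x + 1) := by
  have hu := map_add_one_add_add_one φ x
  have hsq : (x + 1) ^ 2 + (x + 1) = x ^ 2 + x := by
    linear_combination (x + 1) * CharTwo.two_eq_zero (R := F)
  exact ⟨hu ▸ hx.map_add_self_ne_zero, by rw [hu, hsq, hx.mul_map_sq_add]⟩

theorem affine_equation (hx : IsKasamiDerivSolution φ c x) :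
    c * φ (φ (φ x + x)) = φ c * (φ x + x) + c * φ c * φ (φ x + x) + c * φ c := by
  refine mul_left_cancel₀ ((map_ne_zero φ).2 hx.map_add_self_ne_zero) ?_
  have h := hx.mul_map_sq_add
  have hmap := congrArg φ h
  simp only [map_add, map_mul, map_pow] at h hmap ⊢
  linear_combination φ c * h - c * hmap -
    c * φ c * φ x * (φ (φ x) + φ x + 1) * CharTwo.two_eq_zero (R := F)

theorem mul_map_add_eq_wronskian_or (hφ : ∀ x, φ x = x → x = 0 ∨ x = 1)
    (hx : IsKasamiDerivSolution φ c x) (hy : IsKasamiDerivSolution φ c y) :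
    c * φ (x + y) = wronskian φ (φ x + x) (φ y + y) ∨
      c * φ (x + (y + 1)) = wronskian φ (φ x + x) (φ y + y) := by
  have hc := hx.ne_zero
  obtain ⟨B, hB⟩ : ∃ B, wronskian φ (φ x + x) (φ y + y) = c * B :=
    ⟨_, (mul_div_cancel₀ _ hc).symm⟩
  have hW := mul_map_wronskian hx.affine_equation hy.affine_equation
  rw [hB, map_mul] at hW
  have hmap : φ B = B + φ (φ x + x + (φ y + y)) :=
    mul_left_cancel₀ (mul_ne_zero hc ((map_ne_zero φ).2 hc)) (by linear_combination hW)
  have hfix : φ (B + φ (x + y)) = B + φ (x + y) := by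
    simp only [map_add] at hmap ⊢
    linear_combination hmap + (φ (φ x) + φ (φ y)) * CharTwo.two_eq_zero (R := F)
  rw [hB]
  refine (hφ _ hfix).imp (fun h ↦ ?_) fun h ↦ ?_
  · rw [CharTwo.add_eq_zero.1 h]
  · rw [← add_assoc, map_add, map_one, ← h, add_left_comm, CharTwo.add_self_eq_zero, add_zero]

theorem wronskian_mul_map_wronskian (hx : IsKasamiDerivSolution φ c x)
    (hy : IsKasamiDerivSolution φ c y)
    (hW : c * φ (x + y) = wronskian φ (φ x + x) (φ y + y)) :
    wronskian φ x y * φ (wronskian φ x y) = 0 := by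
  have hcx := hx.mul_map_sq_add
  have hcy := hy.mul_map_sq_add
  rw [map_add φ (x ^ 2), map_pow] at hcx
  rw [map_add φ (y ^ 2), map_pow] at hcy
  rw [map_add φ x, wronskian] at hW
  rw [map_wronskian_eq_map_mul_map_add, wronskian_eq_map_mul_add]
  linear_combination (-φ x ^ 2) * hcy - φ y ^ 2 * hcx - φ x * φ y * hW +
    c * φ x * φ y * (φ x * φ y + φ x + φ y) * CharTwo.two_eq_zero (R := F)

theorem wronskian_wronskian_add (hx : IsKasamiDerivSolution φ c x)
    (hy : IsKasamiDerivSolution φ c y)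
    (hW : c * φ (x + y) = wronskian φ (φ x + x) (φ y + y)) :
    wronskian φ (wronskian φ x y) (φ x + x + (φ y + y)) =
      (φ x + x + (φ y + y)) * φ (φ x + x + (φ y + y)) := by
  have hcx := hx.mul_map_sq_add
  have hcy := hy.mul_map_sq_add
  rw [map_add φ (x ^ 2), map_pow] at hcx
  rw [map_add φ (y ^ 2), map_pow] at hcy
  rw [map_add φ x, wronskian] at hW
  rw [wronskian, map_wronskian_eq_map_mul_map_add, wronskian_eq_map_mul_add,
    map_add φ (φ x + x)]
  linear_combination hcx + hcy + (1 - φ x - φ y) * hW +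
    (φ x * (φ y + y) * φ (φ y + y) + φ y * (φ x + x) * φ (φ x + x) + c * φ x * φ y -
      c * (φ x + φ y)) * CharTwo.two_eq_zero (R := F)

theorem map_add_eq_self (hx : IsKasamiDerivSolution φ c x) (hy : IsKasamiDerivSolution φ c y)
    (hW : c * φ (x + y) = wronskian φ (φ x + x) (φ y + y)) : φ (x + y) = x + y := by
  have hs : wronskian φ x y = 0 :=
    (mul_eq_zero.1 (hx.wronskian_mul_map_wronskian hy hW)).elim id (map_eq_zero φ).1
  have hw_mul := hx.wronskian_wronskian_add hy hW
  rw [hs, wronskian, map_zero, zero_mul, zero_mul, add_zero] at hw_mul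
  have hw : φ x + x + (φ y + y) = 0 := (mul_eq_zero.1 hw_mul.symm).elim id (map_eq_zero φ).1
  rwa [← CharTwo.add_eq_zero, map_add, add_add_add_comm]

theorem eq_or_eq_add_one (hφ : ∀ x, φ x = x → x = 0 ∨ x = 1)
    (hx : IsKasamiDerivSolution φ c x) (hy : IsKasamiDerivSolution φ c y) :
    y = x ∨ y = x + 1 := by
  have hfix : φ (x + y) = x + y := by
    obtain h | h := mul_map_add_eq_wronskian_or hφ hx hy
    · exact hx.map_add_eq_self hy h
    · have hfix' : φ (x + (y + 1)) = x + (y + 1) :=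
        hx.map_add_eq_self hy.add_one (by rwa [map_add_one_add_add_one])
      simpa only [← add_assoc, map_add _ _ (1 : F), map_one, add_left_inj] using hfix'
  refine (hφ _ hfix).imp (fun h ↦ ?_) fun h ↦ ?_
  · exact (CharTwo.add_eq_zero.1 h).symm
  · rw [← h, ← add_assoc, CharTwo.add_self_eq_zero, zero_add]

end IsKasamiDerivSolution

theorem isKasamiDerivSolution_kasami (hφ : ∀ x, φ x = x → x = 0 ∨ x = 1)
    (hx : ¬(x = 0 ∨ x = 1)) :
    IsKasamiDerivSolution φ (kasami φ x + kasami φ (x + 1) + 1) x where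
  map_add_self_ne_zero h := hx (hφ x (CharTwo.add_eq_zero.1 h))
  mul_map_sq_add := kasami_add_kasami_add_one_add_one_mul φ x

theorem kasami_add_kasami_add_one_eq_one_iff (hφ : ∀ x, φ x = x → x = 0 ∨ x = 1) :
    kasami φ x + kasami φ (x + 1) = 1 ↔ x = 0 ∨ x = 1 := by
  refine ⟨fun h ↦ ?_, ?_⟩
  · by_contra hx
    exact (isKasamiDerivSolution_kasami hφ hx).ne_zero (CharTwo.add_eq_zero.2 h)
  · rintro (rfl | rfl) <;> simp [CharTwo.add_self_eq_zero]

theorem eq_or_eq_add_one_of_kasami_add_eq (hφ : ∀ x, φ x = x → x = 0 ∨ x = 1)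
    (h : kasami φ x + kasami φ (x + 1) = kasami φ y + kasami φ (y + 1)) :
    y = x ∨ y = x + 1 := by
  have hiff : (x = 0 ∨ x = 1) ↔ (y = 0 ∨ y = 1) := by
    rw [← kasami_add_kasami_add_one_eq_one_iff hφ, h, kasami_add_kasami_add_one_eq_one_iff hφ]
  by_cases hx : x = 0 ∨ x = 1
  · obtain rfl | rfl := hx <;> obtain rfl | rfl := hiff.1 (by simp) <;>
      simp [CharTwo.add_self_eq_zero]
  · have hy := isKasamiDerivSolution_kasami hφ (mt hiff.2 hx)
    rw [← h] at hy
    exact (isKasamiDerivSolution_kasami hφ hx).eq_or_eq_add_one hφ hy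

theorem kasami_is_APN_general (φ : F →+* F) (hφ : ∀ x, φ x = x → x = 0 ∨ x = 1) :
    IsAPN (kasami φ) :=
  .of_monoidWithZeroHom fun _ _ ↦ eq_or_eq_add_one_of_kasami_add_eq hφ

end Derivative

/-- The Kasami function `F(x) = x^(2^(2k) - 2^k + 1)` on `F_{2^n}`,
with `gcd(k, n) = 1`, is almost perfect nonlinear (APN): for every nonzero `a`
and every `b`, the equation `F(x) + F(x + a) = b` has at most 2 solutions. -/
theorem kasami_is_APN (n k : ℕ) (hn : 0 < n) (hk : 0 < k) (hgcd : Nat.gcd k n = 1)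
    (F : Type*) [Field F] [Fintype F] (hcard : Fintype.card F = 2 ^ n)
    (a b : F) (ha : a ≠ 0) :
    {x : F | x ^ (2 ^ (2 * k) - 2 ^ k + 1) + (x + a) ^ (2 ^ (2 * k) - 2 ^ k + 1) = b}.ncard ≤ 2 := by
  have : CharP F 2 := charP_of_card_eq_prime_pow hcard
  have hfix := eq_zero_or_one_of_iterateFrobenius_eq_self hcard hgcd
  simpa only [kasami_iterateFrobenius] using
    (kasami_is_APN_general (iterateFrobenius F 2 k) hfix).ncard_le_two ha b
end

section
/- Let n and k be positive integers with gcd(n, k) = 1 and let q = 2^k. If for some a ∈ F_{2^n} the equation x^{q+1} + x + a = 0 has exactly three solutions in F_{2^n}, then there exists u ∈ F_{2^n} with u ∉ F_4 such that a = (u + u^q)^{q^2+1} / (u + u^{q^2})^{q+1}. -/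
/-!
Write `σ` for the Frobenius map `x ↦ x ^ q`, so that the equation reads `x * σ x + x + a = 0`.
The ratio of two nonzero solutions `x ≠ y` can be written `y / x = σ (σ u) / σ u`, because
`q - 1` is coprime to `2 ^ n - 1`. Substituting `y = x * σ (σ u) / σ u` into
`x * σ x + x = y * σ y + y` leaves an equation that is linear in `σ x`; it gives
`x = (σ u - u) / (u - σ (σ u))`, and therefore expresses `a = -x * (σ x + 1)` as the cross-ratio
`(u - σ u) * (σ² u - σ³ u) / ((u - σ² u) * (σ u - σ³ u))`.
-/

theorem mul_sub_map_map_eq_map_sub {R : Type*} [CommRing R] [IsDomain R] {σ : R →+* R}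
    (hσ : Function.Injective σ) {x y u : R} (hx : x ≠ 0) (hu : u ≠ 0)
    (hxy : x * σ x + x = y * σ y + y) (hyx : y * σ u = x * σ (σ u)) :
    x * (u - σ (σ u)) = σ u - u := by
  have hσyx : σ y * σ (σ u) = σ x * σ (σ (σ u)) := by
    simpa only [map_mul] using congrArg σ hyx
  have hσσu : σ (σ u) ≠ 0 := by simpa only [map_ne_zero_iff σ hσ] using hu
  apply hσ
  simp only [map_mul, map_sub]
  apply mul_left_cancel₀ (mul_ne_zero hx hσσu)
  linear_combination σ u * σ (σ u) * hxy + (σ y * σ (σ u) + σ (σ u)) * hyx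
    + x * σ (σ u) * hσyx

theorem eq_div_of_root {F : Type*} [Field F] (σ : F →+* F) {a x u : F}
    (hroot : x * σ x + x + a = 0) (hne : σ (σ u) ≠ u)
    (hlin : x * (u - σ (σ u)) = σ u - u) :
    a = (u - σ u) * σ (σ (u - σ u)) / ((u - σ (σ u)) * σ (u - σ (σ u))) := by
  have hden : u - σ (σ u) ≠ 0 := sub_ne_zero.mpr hne.symm
  have hσden : σ (u - σ (σ u)) ≠ 0 := (map_ne_zero σ).mpr hden
  have hσlin : (σ x + 1) * σ (u - σ (σ u)) = σ (σ (u - σ u)) := by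
    have hmap := congrArg σ hlin
    simp only [map_mul, map_sub] at hmap ⊢
    linear_combination hmap
  rw [eq_div_iff (mul_ne_zero hden hσden), ← hσlin]
  linear_combination (u - σ (σ u)) * σ (u - σ (σ u)) * hroot
    - (σ x + 1) * σ (u - σ (σ u)) * hlin

theorem exists_eq_div_of_two_roots {F : Type*} [Field F] (σ : F ≃+* F)
    (hσ : ∀ w : F, w ≠ 0 → ∃ v : F, v ≠ 0 ∧ σ v = w * v) {a x y : F}
    (hx0 : x ≠ 0) (hy0 : y ≠ 0) (hxy : x ≠ y)
    (hx : x * σ x + x + a = 0) (hy : y * σ y + y + a = 0) :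
    ∃ u : F, σ (σ u) ≠ u ∧
      a = (u - σ u) * σ (σ (u - σ u)) / ((u - σ (σ u)) * σ (u - σ (σ u))) := by
  obtain ⟨v, hv0, hv⟩ := hσ (y / x) (div_ne_zero hy0 hx0)
  obtain ⟨u, rfl⟩ := σ.surjective v
  have hu : u ≠ 0 := (map_ne_zero σ).mp hv0
  have hyx : y * σ u = x * σ (σ u) := by rw [hv]; field_simp
  have hlin : x * (u - σ (σ u)) = σ u - u :=
    mul_sub_map_map_eq_map_sub (σ := (σ : F →+* F)) σ.injective hx0 hu
      (add_right_cancel (hx.trans hy.symm)) hyx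
  have hne : σ (σ u) ≠ u := by
    intro hσσu
    have hσu : σ u = u := by
      rw [hσσu, sub_self, mul_zero] at hlin
      exact sub_eq_zero.mp hlin.symm
    rw [hσσu, hσu] at hyx
    exact hxy (mul_right_cancel₀ hu hyx).symm
  exact ⟨u, hne, eq_div_of_root (σ : F →+* F) hx hne hlin⟩

theorem exists_pow_eq_mul_of_surjective_pow_sub_one {G₀ : Type*} [GroupWithZero G₀] {q : ℕ}
    (hq : q ≠ 0) (hpow : Function.Surjective fun z : G₀ˣ ↦ z ^ (q - 1)) {w : G₀} (hw : w ≠ 0) :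
    ∃ v : G₀, v ≠ 0 ∧ v ^ q = w * v := by
  obtain ⟨v, hv⟩ := hpow (Units.mk0 w hw)
  have hvw : (v : G₀) ^ (q - 1) = w := congrArg Units.val hv
  exact ⟨v, v.ne_zero, by rw [← hvw, pow_sub_one_mul hq]⟩

theorem surjective_units_pow_two_pow_sub_one {G₀ : Type*} [GroupWithZero G₀] {n k : ℕ}
    (hcard : Nat.card G₀ = 2 ^ n) (hnk : n.Coprime k) :
    Function.Surjective fun z : G₀ˣ ↦ z ^ (2 ^ k - 1) := by
  have hcop : (Nat.card G₀ˣ).Coprime (2 ^ k - 1) := by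
    rw [Nat.card_units, hcard, Nat.Coprime, Nat.pow_sub_one_gcd_pow_sub_one,
      hnk.gcd_eq_one, pow_one]
  exact (powCoprime hcop).surjective

theorem pow_pow_eq_self {M : Type*} [Monoid M] {x : M} {m : ℕ} (hx : x ^ m = x) (j : ℕ) :
    x ^ m ^ j = x :=
  (congrFun (pow_iterate m j) x).symm.trans (Function.iterate_fixed hx j)

theorem nontrivial_sdiff_singleton {α : Type*} {s : Set α} (hs : 2 < s.ncard) (x : α) :
    (s \ {x}).Nontrivial := by
  have hcard : 1 < (s \ {x}).ncard := by
    have hpred := Set.pred_ncard_le_ncard_sdiff_singleton s x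
    lia
  exact (Set.one_lt_ncard_iff_nontrivial_and_finite.mp hcard).1

theorem three_solutions_param_general {F : Type*} [Field F] (p k : ℕ) [ExpChar F p]
    [PerfectRing F p] (hpow : Function.Surjective fun z : Fˣ ↦ z ^ (p ^ k - 1)) {a : F}
    (h : ({x : F | x ^ (p ^ k + 1) + x + a = 0} \ {0}).Nontrivial) :
    ∃ u : F, u ^ (p ^ k) ^ 2 ≠ u ∧
      a = (u - u ^ p ^ k) ^ ((p ^ k) ^ 2 + 1) / (u - u ^ (p ^ k) ^ 2) ^ (p ^ k + 1) := by
  obtain ⟨x, ⟨hx, hx0⟩, y, ⟨hy, hy0⟩, hxy⟩ := h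
  have hq : p ^ k ≠ 0 := pow_ne_zero k (expChar_pos F p).ne'
  have hroot (z : F) (hz : z ^ (p ^ k + 1) + z + a = 0) :
      z * iterateFrobeniusEquiv F p k z + z + a = 0 := by
    rwa [iterateFrobeniusEquiv_def, ← pow_succ']
  simpa only [iterateFrobeniusEquiv_def, ← pow_mul, ← sq, ← pow_succ, ← pow_succ'] using
    exists_eq_div_of_two_roots (iterateFrobeniusEquiv F p k)
      (fun _ ↦ exists_pow_eq_mul_of_surjective_pow_sub_one hq hpow)
      hx0 hy0 hxy (hroot x hx) (hroot y hy)

/-- For `gcd(n,k) = 1`, `q = 2^k`, if `x^(q+1) + x + a = 0` has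
exactly three solutions in `F_{2^n}`, then there is `u ∉ F_4` (i.e. `u^4 ≠ u`)
with `a = (u + u^q)^(q^2+1) / (u + u^(q^2))^(q+1)`. -/
theorem three_solutions_param (n k : ℕ) (hn : 0 < n) (hk : 0 < k)
    (hgcd : Nat.gcd n k = 1) (q : ℕ) (hq : q = 2 ^ k)
    (F : Type*) [Field F] [Fintype F] (hcard : Fintype.card F = 2 ^ n)
    (a : F) (h3 : {x : F | x ^ (q + 1) + x + a = 0}.ncard = 3) :
    ∃ u : F, u ^ 4 ≠ u ∧
      a = (u + u ^ q) ^ (q ^ 2 + 1) / (u + u ^ (q ^ 2)) ^ (q + 1) := by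
  subst hq
  have : CharP F 2 := charP_of_card_eq_prime_pow hcard
  obtain ⟨u, hu, ha⟩ := three_solutions_param_general 2 k
    (surjective_units_pow_two_pow_sub_one (Nat.card_eq_fintype_card.trans hcard) hgcd)
    (nontrivial_sdiff_singleton (by rw [h3]; norm_num) 0)
  refine ⟨u, fun h4 ↦ hu ?_, by simpa only [CharTwo.sub_eq_add] using ha⟩
  rw [pow_right_comm]
  exact pow_pow_eq_self h4 k
end

section
/- Let n and k be positive integers with gcd(n, k) = 1 and k odd, let q = 2^k, and let T_k(X) = X + X^2 + X^4 + ⋯ + X^{2^{k-1}} (the sum of X^{2^i} for 0 ≤ i ≤ k−1). Then the Müller–Cohen–Matthews map f : F_{2^n} → F_{2^n} defined by f(x) = T_k(x)^{q+1} / x^q for x ≠ 0 and f(0) = 0 is a bijection of F_{2^n}. -/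
/-!
Write `T` for the truncated trace `T_k`, so that `T` is additive, commutes with squaring, and
`T(x)² + T(x) = x^q + x`.  For `x ≠ 0`, the pair `c = f(x)`, `u = x / T(x)` recovers `x = c u^(q+1)`
and `T(x) = c u^q`; hence injectivity of `f` says that for `c ≠ 0` the equation
`T(c u^(q+1)) = c u^q` has at most one nonzero solution `u`.

Every nonzero solution satisfies an affine equation `c^q u^(q²) + c² u^q + c u = c`, so the
difference `v` of two solutions satisfies the homogeneous one.  Applying `T` to the expansion
`c (u+v)^(q+1) = c u^(q+1) + A + c v^(q+1)` with `A = c (u^q v + u v^q)` then forces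
`A² = c v^(q+1)` as soon as `T` is injective.  If `v ≠ 0`, then `r = u A / v` is an Artin–Schreier
root, `r² + r = c u^(q+1)`, so `c u^q = T(r² + r) = r^q + r`, which collapses to `A = 0`, a
contradiction.
-/

theorem pow_pow_gcd_eq_self {M : Type*} [Monoid M] {p m n : ℕ} {x : M}
    (hm : x ^ p ^ m = x) (hn : x ^ p ^ n = x) : x ^ p ^ m.gcd n = x := by
  have isPeriodicPt_iff (l : ℕ) : Function.IsPeriodicPt (· ^ p) l x ↔ x ^ p ^ l = x := by
    rw [Function.IsPeriodicPt, Function.IsFixedPt, pow_iterate]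
  rw [← isPeriodicPt_iff] at hm hn ⊢
  exact hm.gcd hn

section TruncatedTrace

variable {R : Type*} [CommRing R] (p k : ℕ)

/-- The truncated trace `T_k(x) = x + x^p + ⋯ + x^(p^(k-1))` in characteristic exponent `p`, as an
additive map. -/
def truncatedTrace [ExpChar R p] : R →+ R :=
  ∑ i ∈ Finset.range k, (iterateFrobenius R p i : R →+ R)

theorem truncatedTrace_apply [ExpChar R p] (x : R) :
    truncatedTrace p k x = ∑ i ∈ Finset.range k, x ^ p ^ i := by
  simp [truncatedTrace, iterateFrobenius_def]

theorem truncatedTrace_pow [ExpChar R p] (x : R) :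
    truncatedTrace p k (x ^ p) = truncatedTrace p k x ^ p := by
  simp only [truncatedTrace_apply, sum_pow_char p, pow_right_comm x p]

theorem truncatedTrace_pow_sub_self [ExpChar R p] (x : R) :
    truncatedTrace p k x ^ p - truncatedTrace p k x = x ^ p ^ k - x := by
  have telescope := Finset.sum_range_sub (fun i ↦ x ^ p ^ i) k
  simpa only [Finset.sum_sub_distrib, pow_succ, pow_mul, ← sum_pow_char p,
    ← truncatedTrace_apply, pow_zero, pow_one] using telescope

variable {p k}

theorem truncatedTrace_eq_nsmul [ExpChar R p] {x : R} (hx : x ^ p = x) :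
    truncatedTrace p k x = k • x := by
  have hpow (i : ℕ) : x ^ p ^ i = x := by
    rw [← iterate_frobenius (R := R) p i x]
    exact Function.iterate_fixed hx i
  simp only [truncatedTrace_apply, hpow, Finset.sum_const, Finset.card_range]

theorem eq_zero_of_truncatedTrace_eq_zero [Fact p.Prime] [CharP R p] {n : ℕ} (hpk : p.Coprime k)
    (hnk : n.Coprime k) {x : R} (hx : x ^ p ^ n = x) (hT : truncatedTrace p k x = 0) : x = 0 := by
  have hxk : x ^ p ^ k = x := by
    have h := truncatedTrace_pow_sub_self p k x
    rwa [hT, zero_pow (NeZero.ne p), sub_zero, eq_comm, sub_eq_zero] at h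
  have hxp : x ^ p = x := by simpa [hnk.gcd_eq_one] using pow_pow_gcd_eq_self hx hxk
  rw [truncatedTrace_eq_nsmul hxp] at hT
  have hpx : p • x = 0 := by simp
  exact AddMonoid.addOrderOf_eq_one_iff.mp <| Nat.eq_one_of_dvd_coprimes hpk
    (addOrderOf_dvd_of_nsmul_eq_zero hpx) (addOrderOf_dvd_of_nsmul_eq_zero hT)

end TruncatedTrace

section MCMParam

variable {R : Type*} [CommRing R] {k : ℕ} {c u v : R}

/-- The polarization `A = c (u^q v + u v^q)` of `u ↦ c u^(q+1)`, where `q = 2^k`. -/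
def mcmPolar (k : ℕ) (c u v : R) : R := c * (u ^ 2 ^ k * v + u * v ^ 2 ^ k)

variable [CharP R 2]

theorem mul_add_pow_eq_add_mcmPolar_add (c u v : R) :
    c * (u + v) ^ (2 ^ k + 1) =
      c * u ^ (2 ^ k + 1) + mcmPolar k c u v + c * v ^ (2 ^ k + 1) := by
  rw [pow_succ (u + v), add_pow_char_pow, mcmPolar]
  ring

theorem truncatedTrace_sq_add_self (x : R) :
    truncatedTrace 2 k x ^ 2 + truncatedTrace 2 k x = x ^ 2 ^ k + x := by
  simpa only [CharTwo.sub_eq_add] using truncatedTrace_pow_sub_self 2 k x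

theorem truncatedTrace_sq_add (x : R) : truncatedTrace 2 k (x ^ 2 + x) = x ^ 2 ^ k + x := by
  rw [map_add, truncatedTrace_pow, truncatedTrace_sq_add_self]

/-- `u` is a nonzero solution of `T_k(c u^(q+1)) = c u^q`, where `q = 2^k`. For `c ≠ 0` these `u`
parametrize the preimages `c u^(q+1)` of `c` under `mcm k`. -/
structure IsMCMParam (k : ℕ) (c u : R) : Prop where
  ne_zero : u ≠ 0
  truncatedTrace_eq : truncatedTrace 2 k (c * u ^ (2 ^ k + 1)) = c * u ^ 2 ^ k

theorem IsMCMParam.truncatedTrace_mcmPolar_add (hu : IsMCMParam k c u)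
    (huv : IsMCMParam k c (u + v)) :
    truncatedTrace 2 k (mcmPolar k c u v) + truncatedTrace 2 k (c * v ^ (2 ^ k + 1)) =
      c * v ^ 2 ^ k := by
  have h := huv.truncatedTrace_eq
  rw [mul_add_pow_eq_add_mcmPolar_add, map_add, map_add, hu.truncatedTrace_eq, add_pow_char_pow,
    mul_add, add_assoc] at h
  exact add_left_cancel h

section IsDomain

variable [IsDomain R]

theorem IsMCMParam.affine_eq (hu : IsMCMParam k c u) :
    c ^ 2 ^ k * (u ^ 2 ^ k) ^ 2 ^ k + c ^ 2 * u ^ 2 ^ k + c * u = c := by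
  have h := truncatedTrace_sq_add_self (k := k) (c * u ^ (2 ^ k + 1))
  rw [hu.truncatedTrace_eq] at h
  simp only [mul_pow, pow_succ u] at h
  have huq : u ^ 2 ^ k ≠ 0 := pow_ne_zero _ hu.ne_zero
  apply mul_left_cancel₀ huq
  grind

theorem IsMCMParam.homogeneous_eq (hu : IsMCMParam k c u) (huv : IsMCMParam k c (u + v)) :
    c ^ 2 ^ k * (v ^ 2 ^ k) ^ 2 ^ k + c * v = c ^ 2 * v ^ 2 ^ k := by
  have h := huv.affine_eq
  rw [add_pow_char_pow, add_pow_char_pow] at h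
  grind [hu.affine_eq]

theorem IsMCMParam.truncatedTrace_mcmPolar_sq (hu : IsMCMParam k c u)
    (huv : IsMCMParam k c (u + v)) :
    truncatedTrace 2 k (mcmPolar k c u v) ^ 2 = truncatedTrace 2 k (c * v ^ (2 ^ k + 1)) := by
  have sq_add_self : truncatedTrace 2 k (c * v ^ (2 ^ k + 1)) ^ 2 +
      truncatedTrace 2 k (c * v ^ (2 ^ k + 1)) = (c * v ^ 2 ^ k) ^ 2 := by
    rw [truncatedTrace_sq_add_self]
    calc (c * v ^ (2 ^ k + 1)) ^ 2 ^ k + c * v ^ (2 ^ k + 1)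
        = v ^ 2 ^ k * (c ^ 2 ^ k * (v ^ 2 ^ k) ^ 2 ^ k + c * v) := by
          simp only [mul_pow, pow_succ v]
          ring
      _ = (c * v ^ 2 ^ k) ^ 2 := by
          rw [hu.homogeneous_eq huv]
          ring
  rw [← hu.truncatedTrace_mcmPolar_add huv, CharTwo.add_sq, add_comm] at sq_add_self
  exact (add_right_cancel sq_add_self).symm

theorem IsMCMParam.mcmPolar_sq (hT : Function.Injective (truncatedTrace (R := R) 2 k))
    (hu : IsMCMParam k c u) (huv : IsMCMParam k c (u + v)) :
    mcmPolar k c u v ^ 2 = c * v ^ (2 ^ k + 1) := by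
  apply hT
  rw [truncatedTrace_pow, hu.truncatedTrace_mcmPolar_sq huv]

theorem IsMCMParam.mcmPolar_pow (hu : IsMCMParam k c u) (huv : IsMCMParam k c (u + v)) :
    mcmPolar k c u v ^ 2 ^ k = mcmPolar k c u v + c * v ^ 2 ^ k := by
  rw [add_comm, ← CharTwo.add_eq_iff_eq_add, ← truncatedTrace_sq_add_self,
    hu.truncatedTrace_mcmPolar_sq huv, add_comm, hu.truncatedTrace_mcmPolar_add huv]

end IsDomain

end MCMParam

section Field

variable {F : Type*} [Field F] [CharP F 2] {k : ℕ} {c u v w x : F}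

theorem mul_mcmPolar_div_sq_add_self (hv : v ≠ 0)
    (hA : mcmPolar k c u v ^ 2 = c * v ^ (2 ^ k + 1)) :
    (u * mcmPolar k c u v / v) ^ 2 + u * mcmPolar k c u v / v = c * u ^ (2 ^ k + 1) := by
  have expand : u * mcmPolar k c u v * v =
      u ^ 2 * mcmPolar k c u v ^ 2 + c * u ^ (2 ^ k + 1) * v ^ 2 := by
    rw [hA, mcmPolar]
    ring
  calc (u * mcmPolar k c u v / v) ^ 2 + u * mcmPolar k c u v / v
      = (u ^ 2 * mcmPolar k c u v ^ 2 + u * mcmPolar k c u v * v) / v ^ 2 := by field_simp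
    _ = c * u ^ (2 ^ k + 1) := by
        rw [expand, CharTwo.add_cancel_left, mul_div_cancel_right₀ _ (pow_ne_zero 2 hv)]

theorem IsMCMParam.mul_mcmPolar_div_pow_add_self (hv : v ≠ 0)
    (hA : mcmPolar k c u v ^ 2 = c * v ^ (2 ^ k + 1)) (hu : IsMCMParam k c u) :
    (u * mcmPolar k c u v / v) ^ 2 ^ k + u * mcmPolar k c u v / v = c * u ^ 2 ^ k := by
  rw [← truncatedTrace_sq_add, mul_mcmPolar_div_sq_add_self hv hA, hu.truncatedTrace_eq]

theorem IsMCMParam.mcmPolar_eq_zero (hT : Function.Injective (truncatedTrace (R := F) 2 k))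
    (hu : IsMCMParam k c u) (huv : IsMCMParam k c (u + v)) (hv : v ≠ 0) :
    mcmPolar k c u v = 0 := by
  have h := hu.mul_mcmPolar_div_pow_add_self hv (hu.mcmPolar_sq hT huv)
  rw [div_pow, mul_pow, hu.mcmPolar_pow huv] at h
  have hvq : v ^ 2 ^ k ≠ 0 := pow_ne_zero _ hv
  have div_add_div_eq_zero :
      u ^ 2 ^ k * mcmPolar k c u v / v ^ 2 ^ k + u * mcmPolar k c u v / v = 0 := by
    rw [mul_add, add_div, add_right_comm, ← mul_assoc, mul_div_cancel_right₀ _ hvq,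
      mul_comm _ c] at h
    exact add_eq_right.mp h
  have mcmPolar_mul_eq_zero : mcmPolar k c u v * (u ^ 2 ^ k * v + u * v ^ 2 ^ k) = 0 := by
    field_simp at div_add_div_eq_zero
    grind
  rw [← sq_eq_zero_iff]
  calc mcmPolar k c u v ^ 2
      = c * (mcmPolar k c u v * (u ^ 2 ^ k * v + u * v ^ 2 ^ k)) := by
        simp only [mcmPolar]
        ring
    _ = 0 := by rw [mcmPolar_mul_eq_zero, mul_zero]

theorem IsMCMParam.eq (hT : Function.Injective (truncatedTrace (R := F) 2 k)) (hc : c ≠ 0)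
    (hu : IsMCMParam k c u) (hw : IsMCMParam k c w) : u = w := by
  by_contra huw
  have hv : u + w ≠ 0 := mt CharTwo.add_eq_zero.mp huw
  have huv : IsMCMParam k c (u + (u + w)) := by rwa [CharTwo.add_cancel_left]
  have hsq := hu.mcmPolar_sq hT huv
  rw [hu.mcmPolar_eq_zero hT huv hv, zero_pow two_ne_zero] at hsq
  exact mul_ne_zero hc (pow_ne_zero _ hv) hsq.symm

/-- The Müller–Cohen–Matthews map `f_{k,2^k+1}`. The division convention `0 / 0 = 0` gives it the
value `0` at `0`. -/
def mcm (k : ℕ) (x : F) : F := truncatedTrace 2 k x ^ (2 ^ k + 1) / x ^ 2 ^ k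

theorem mcm_mul_div_pow (hT : truncatedTrace 2 k x ≠ 0) :
    mcm k x * (x / truncatedTrace 2 k x) ^ 2 ^ k = truncatedTrace 2 k x := by
  have hx : x ≠ 0 := ne_zero_of_map hT
  rw [mcm, div_pow, pow_succ]
  field_simp

theorem mcm_mul_div_pow_succ (hT : truncatedTrace 2 k x ≠ 0) :
    mcm k x * (x / truncatedTrace 2 k x) ^ (2 ^ k + 1) = x := by
  rw [pow_succ, ← mul_assoc, mcm_mul_div_pow hT, mul_div_cancel₀ x hT]

theorem isMCMParam_div (hT : truncatedTrace 2 k x ≠ 0) :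
    IsMCMParam k (mcm k x) (x / truncatedTrace 2 k x) where
  ne_zero := div_ne_zero (ne_zero_of_map hT) hT
  truncatedTrace_eq := by rw [mcm_mul_div_pow_succ hT, mcm_mul_div_pow hT]

theorem mcm_eq_zero_iff (hT : Function.Injective (truncatedTrace (R := F) 2 k)) :
    mcm k x = 0 ↔ x = 0 := by
  simp [mcm, map_eq_zero_iff _ hT]

theorem mcm_injective (hT : Function.Injective (truncatedTrace (R := F) 2 k)) :
    Function.Injective (mcm k : F → F) := by
  intro x y hxy
  by_cases hx : x = 0
  · rw [hx, eq_comm, ← mcm_eq_zero_iff hT, ← hxy, hx, mcm_eq_zero_iff hT]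
  have hy : y ≠ 0 := by rwa [ne_eq, ← mcm_eq_zero_iff hT, ← hxy, mcm_eq_zero_iff hT]
  have hTx : truncatedTrace 2 k x ≠ 0 := (map_ne_zero_iff _ hT).mpr hx
  have hTy : truncatedTrace 2 k y ≠ 0 := (map_ne_zero_iff _ hT).mpr hy
  have hdiv : x / truncatedTrace 2 k x = y / truncatedTrace 2 k y :=
    (isMCMParam_div hTx).eq hT (mt (mcm_eq_zero_iff hT).mp hx) (hxy ▸ isMCMParam_div hTy)
  rw [← mcm_mul_div_pow_succ hTx, hxy, hdiv, mcm_mul_div_pow_succ hTy]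

end Field

/-- For `gcd(n,k) = 1` with `k` odd and `q = 2^k`, the
Müller–Cohen–Matthews map `f(x) = T_k(x)^(q+1)/x^q` (for `x ≠ 0`, with
`f(0) = 0`), where `T_k(x) = ∑_{i<k} x^(2^i)`, is a bijection of `F_{2^n}`. -/
theorem MCM_bijective (n k : ℕ) (hn : 0 < n) (hk : 0 < k) (hkodd : Odd k)
    (hgcd : Nat.gcd n k = 1) (q : ℕ) (hq : q = 2 ^ k)
    (F : Type*) [Field F] [Fintype F] [DecidableEq F]
    (hcard : Fintype.card F = 2 ^ n) :
    Function.Bijective (fun x : F =>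
      if x = 0 then 0 else (∑ i ∈ Finset.range k, x ^ 2 ^ i) ^ (q + 1) / x ^ q) := by
  have : CharP F 2 := charP_of_card_eq_prime_pow hcard
  have hT : Function.Injective (truncatedTrace (R := F) 2 k) := by
    refine (injective_iff_map_eq_zero _).mpr fun x ↦ ?_
    exact eq_zero_of_truncatedTrace_eq_zero hkodd.coprime_two_left hgcd
      (hcard ▸ FiniteField.pow_card x)
  convert (mcm_injective hT).bijective_of_finite using 2 with x
  split_ifs with hx
  · rw [(mcm_eq_zero_iff hT).mpr hx]
  · rw [mcm, truncatedTrace_apply, hq]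
end

section
/- Let n be an odd positive integer and k a positive integer with gcd(k, n) = 1, let q = 2^k, and let s be the multiplicative inverse of q − 1 modulo 2^n − 1 (which exists since gcd(2^k − 1, 2^n − 1) = 1). Then for every c ∈ F_{2^n}, there is at most one element v ∈ F_{2^n} satisfying both Tr(v^{−s}) = 1 and (v + 1)^{q+1} + c·v = 0 (note any such v is nonzero, since v = 0 gives (v+1)^{q+1} + cv = 1 ≠ 0). -/
/-!
Let `v ≠ w` both solve `(x + 1) ^ (q + 1) + c * x = 0`. Then `c`, `v + 1` and `w + 1` are nonzero.
Put `r = ((w + 1) / (v + 1)) ^ s`, so that `r ^ (q - 1) = (w + 1) / (v + 1)`. Raising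
`(r ^ q - r) * (v + 1) = r * (w - v)` to the `q`-th power and eliminating the `q`-th powers of
`v + 1` and `w - v` by means of the two equations gives `(r ^ q - r) ^ (q - 1) = v⁻¹`. Hence
`v⁻¹ ^ s = r ^ q - r`, and this has trace `0` because the trace is invariant under Frobenius.
-/

section FiniteField

theorem pow_eq_self_of_modEq_card_sub_one {K : Type*} [GroupWithZero K] [Fintype K] {m : ℕ}
    (hm : m ≡ 1 [MOD Fintype.card K - 1]) {x : K} (hx : x ≠ 0) : x ^ m = x := by
  simpa only [pow_one] using pow_eq_pow_of_modEq hm (FiniteField.pow_card_sub_one_eq_one x hx)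

theorem pow_eq_mul_self_iff_eq_pow {K : Type*} [GroupWithZero K] [Fintype K] {q s : ℕ}
    (hq : q ≠ 0) (hs : (q - 1) * s ≡ 1 [MOD Fintype.card K - 1]) {x y : K} (hx : x ≠ 0)
    (hy : y ≠ 0) : x ^ q = y * x ↔ x = y ^ s := by
  rw [← pow_sub_one_mul hq, mul_left_inj' hx]
  constructor
  · rintro rfl
    rw [← pow_mul, pow_eq_self_of_modEq_card_sub_one hs hx]
  · rintro rfl
    rw [← pow_mul', pow_eq_self_of_modEq_card_sub_one hs hy]

theorem trace_pow_card_pow {K L : Type*} [Field K] [Fintype K] [Field L] [Algebra K L]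
    [Algebra.IsAlgebraic K L] (m : ℕ) (x : L) :
    Algebra.trace K L (x ^ Fintype.card K ^ m) = Algebra.trace K L x := by
  have hfrob := Algebra.trace_eq_of_algEquiv (FiniteField.frobeniusAlgEquivOfAlgebraic K L ^ m) x
  rwa [AlgEquiv.coe_pow, FiniteField.coe_frobeniusAlgEquivOfAlgebraic_iterate] at hfrob

theorem algebraMap_trace_zmod_eq_sum_pow {p n : ℕ} [Fact p.Prime] {L : Type*} [Field L] [Fintype L]
    [Algebra (ZMod p) L] (hcard : Fintype.card L = p ^ n) (x : L) :
    algebraMap (ZMod p) L (Algebra.trace (ZMod p) L x) = ∑ i ∈ Finset.range n, x ^ p ^ i := by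
  have hrank : Module.finrank (ZMod p) L = n := by
    apply Nat.pow_right_injective (Fact.out : p.Prime).two_le
    simpa only [ZMod.card, hcard] using (Module.card_eq_pow_finrank (K := ZMod p) (V := L)).symm
  rw [FiniteField.algebraMap_trace_eq_sum_pow, hrank, Nat.card_zmod]

theorem sum_range_pow_sub_self_pow_eq_zero {p n : ℕ} [Fact p.Prime] {L : Type*} [Field L]
    [Fintype L] (hcard : Fintype.card L = p ^ n) (k : ℕ) (x : L) :
    ∑ i ∈ Finset.range n, (x ^ p ^ k - x) ^ p ^ i = 0 := by
  have : CharP L p := charP_of_card_eq_prime_pow hcard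
  let _ : Algebra (ZMod p) L := ZMod.algebra L p
  have htrace : Algebra.trace (ZMod p) L (x ^ p ^ k) = Algebra.trace (ZMod p) L x := by
    simpa only [ZMod.card] using trace_pow_card_pow (K := ZMod p) k x
  rw [← algebraMap_trace_zmod_eq_sum_pow hcard, map_sub, htrace, sub_self, map_zero]

end FiniteField

section Endomorphism

variable {R : Type*} [CommRing R] {φ : R →+* R} {c v w : R}

theorem ne_zero_of_map_add_one_mul_add_mul_eq_zero [Nontrivial R]
    (hv : φ (v + 1) * (v + 1) + c * v = 0) : v ≠ 0 := by
  rintro rfl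
  simp at hv

theorem add_one_ne_zero_of_map_add_one_mul_add_mul_eq_zero (hc : c ≠ 0)
    (hv : φ (v + 1) * (v + 1) + c * v = 0) : v + 1 ≠ 0 := by
  intro hv₁
  rw [hv₁, mul_zero, eq_neg_of_add_eq_zero_left hv₁] at hv
  exact hc (by linear_combination -hv)

theorem coeff_ne_zero_of_map_add_one_mul_add_mul_eq_zero [NoZeroDivisors R]
    (hφ : Function.Injective φ) (hne : v ≠ w) (hv : φ (v + 1) * (v + 1) + c * v = 0)
    (hw : φ (w + 1) * (w + 1) + c * w = 0) : c ≠ 0 := by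
  rintro rfl
  have add_one_eq_zero {u : R} (hu : φ (u + 1) * (u + 1) + 0 * u = 0) : u + 1 = 0 := by
    rw [zero_mul, add_zero, mul_eq_zero, map_eq_zero_iff φ hφ, or_self] at hu
    exact hu
  exact hne (add_right_cancel ((add_one_eq_zero hv).trans (add_one_eq_zero hw).symm))

theorem map_sub_mul_add_one_mul_add_one (hv : φ (v + 1) * (v + 1) + c * v = 0)
    (hw : φ (w + 1) * (w + 1) + c * w = 0) :
    φ (w - v) * ((v + 1) * (w + 1)) = c * (v - w) := by
  rw [← add_sub_add_right_eq_sub w v 1, map_sub]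
  linear_combination (v + 1) * hw - (w + 1) * hv

theorem mul_map_map_sub_self [IsDomain R] {r : R} (hc : c ≠ 0)
    (hv : φ (v + 1) * (v + 1) + c * v = 0) (hw : φ (w + 1) * (w + 1) + c * w = 0)
    (hr : φ r * (v + 1) = (w + 1) * r) : v * φ (φ r - r) = φ r - r := by
  have hv₁ : v + 1 ≠ 0 := add_one_ne_zero_of_map_add_one_mul_add_mul_eq_zero hc hv
  have hw₁ : w + 1 ≠ 0 := add_one_ne_zero_of_map_add_one_mul_add_mul_eq_zero hc hw
  have hdiff : (φ r - r) * (v + 1) = r * (w - v) := by linear_combination hr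
  have hmap : φ (φ r - r) * φ (v + 1) = φ r * φ (w - v) := by rw [← map_mul, hdiff, map_mul]
  apply mul_left_cancel₀ (mul_ne_zero hc (mul_ne_zero hv₁ hw₁))
  calc c * ((v + 1) * (w + 1)) * (v * φ (φ r - r))
      = -((φ (φ r - r) * φ (v + 1)) * (v + 1) ^ 2 * (w + 1)) := by
        linear_combination φ (φ r - r) * (v + 1) * (w + 1) * hv
    _ = -(φ r * (v + 1) * (φ (w - v) * ((v + 1) * (w + 1)))) := by rw [hmap]; ring
    _ = c * (w + 1) * (r * (w - v)) := by
        rw [map_sub_mul_add_one_mul_add_one hv hw, hr]; ring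
    _ = c * ((v + 1) * (w + 1)) * (φ r - r) := by rw [← hdiff]; ring

end Endomorphism

theorem exists_inv_pow_eq_pow_sub_self_of_ne {F : Type*} [Field F] [Fintype F] [CharP F 2]
    {k s : ℕ} (hs : (2 ^ k - 1) * s ≡ 1 [MOD Fintype.card F - 1]) {c v w : F} (hne : v ≠ w)
    (hv : (v + 1) ^ (2 ^ k + 1) + c * v = 0) (hw : (w + 1) ^ (2 ^ k + 1) + c * w = 0) :
    ∃ r : F, v⁻¹ ^ s = r ^ 2 ^ k - r := by
  have hq : 2 ^ k ≠ 0 := by positivity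
  let φ := iterateFrobenius F 2 k
  replace hv : φ (v + 1) * (v + 1) + c * v = 0 := by rwa [iterateFrobenius_def, ← pow_succ]
  replace hw : φ (w + 1) * (w + 1) + c * w = 0 := by rwa [iterateFrobenius_def, ← pow_succ]
  have hc : c ≠ 0 := coeff_ne_zero_of_map_add_one_mul_add_mul_eq_zero φ.injective hne hv hw
  have hv₀ : v ≠ 0 := ne_zero_of_map_add_one_mul_add_mul_eq_zero hv
  have hv₁ : v + 1 ≠ 0 := add_one_ne_zero_of_map_add_one_mul_add_mul_eq_zero hc hv
  have hw₁ : w + 1 ≠ 0 := add_one_ne_zero_of_map_add_one_mul_add_mul_eq_zero hc hw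
  have hy : (w + 1) / (v + 1) ≠ 0 := div_ne_zero hw₁ hv₁
  obtain ⟨r, hr⟩ : ∃ r, r = ((w + 1) / (v + 1)) ^ s := ⟨_, rfl⟩
  have hr₀ : r ≠ 0 := hr ▸ pow_ne_zero s hy
  have hφr : φ r * (v + 1) = (w + 1) * r := by
    rw [iterateFrobenius_def, (pow_eq_mul_self_iff_eq_pow hq hs hr₀ hy).2 hr]
    field_simp
  have hd₀ : φ r - r ≠ 0 := by
    intro hd
    have hdiff : r * (w - v) = 0 := by linear_combination (v + 1) * hd - hφr
    exact mul_ne_zero hr₀ (sub_ne_zero.2 hne.symm) hdiff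
  have hφd : (φ r - r) ^ 2 ^ k = v⁻¹ * (φ r - r) := by
    rw [eq_inv_mul_iff_mul_eq₀ hv₀, ← iterateFrobenius_def]
    exact mul_map_map_sub_self hc hv hw hφr
  refine ⟨r, ?_⟩
  rw [← iterateFrobenius_def]
  exact ((pow_eq_mul_self_iff_eq_pow hq hs hd₀ (inv_ne_zero hv₀)).1 hφd).symm

theorem at_most_one_solution_with_trace_one_general {n k s : ℕ}
    (hs : (2 ^ k - 1) * s ≡ 1 [MOD 2 ^ n - 1]) {F : Type*} [Field F] [Fintype F]
    (hcard : Fintype.card F = 2 ^ n) {c v w : F}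
    (htr : ∑ i ∈ Finset.range n, (v⁻¹ ^ s) ^ 2 ^ i = 1)
    (hv : (v + 1) ^ (2 ^ k + 1) + c * v = 0) (hw : (w + 1) ^ (2 ^ k + 1) + c * w = 0) :
    v = w := by
  have : CharP F 2 := charP_of_card_eq_prime_pow hcard
  by_contra hne
  obtain ⟨r, hr⟩ := exists_inv_pow_eq_pow_sub_self_of_ne (hcard ▸ hs) hne hv hw
  rw [hr, sum_range_pow_sub_self_pow_eq_zero hcard] at htr
  exact zero_ne_one htr

/-- For `n` odd, `gcd(k,n) = 1`, `q = 2^k`, and `s` the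
multiplicative inverse of `q - 1` modulo `2^n - 1`, for every `c ∈ F_{2^n}`
there is at most one `v` with `Tr(v^{-s}) = 1` and `(v+1)^(q+1) + c·v = 0`,
where `Tr(x) = ∑_{i<n} x^(2^i)` is the absolute trace. -/
theorem at_most_one_solution_with_trace_one (n k : ℕ) (hn : 0 < n) (hnodd : Odd n)
    (hk : 0 < k) (hgcd : Nat.gcd k n = 1) (q : ℕ) (hq : q = 2 ^ k)
    (s : ℕ) (hs : (q - 1) * s ≡ 1 [MOD 2 ^ n - 1])
    (F : Type*) [Field F] [Fintype F] (hcard : Fintype.card F = 2 ^ n)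
    (c : F) :
    {v : F | (∑ i ∈ Finset.range n, ((v⁻¹) ^ s) ^ 2 ^ i) = 1 ∧
      (v + 1) ^ (q + 1) + c * v = 0}.Subsingleton := by
  subst hq
  exact fun v hv w hw => at_most_one_solution_with_trace_one_general hs hcard hv.1 hv.2 hw.2
end
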